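/- With w(x,y|ρ) = (1−ρ²)² − 4xyρ(1+ρ²) + 4ρ²(x²+y²) and transition density f(x|y,ρ) = (2/π)(1−ρ²)√(1−x²)/w(x,y|ρ), for |ρ₁|, |ρ₂| < 1 and x, y₂ ∈ [−1,1]: ∫_{-1}^{1} f(x|y₁,ρ₁)·f(y₁|y₂,ρ₂) dy₁ = f(x|y₂, ρ₁ρ₂). (Chapman–Kolmogorov property.) -/

import Mathlib

open Polynomial Polynomial.Chebyshev MeasureTheory

noncomputable def ckU (n : ℕ) (x : ℝ) : ℝ := (U ℝ (n : ℤ)).eval x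

theorem ckU_zero (x : ℝ) : ckU 0 x = 1 := by simp [ckU]

theorem ckU_one (x : ℝ) : ckU 1 x = 2 * x := by simp [ckU]

theorem ckU_add_two (n : ℕ) (x : ℝ) : ckU (n + 2) x = 2 * x * ckU (n + 1) x - ckU n x := by
  simp [ckU, U_add_two]

theorem ckU_continuous (n : ℕ) : Continuous (ckU n) := by
  unfold ckU; fun_prop

theorem ckU_bound (n : ℕ) {x : ℝ} (hx : x ∈ Set.Icc (-1 : ℝ) 1) : |ckU n x| ≤ n + 1 := by
  induction n with
  | zero => simp [ckU_zero]
  | succ n ih =>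
    have h1 : ckU (n + 1) x = x * ckU n x + (T ℝ ((n : ℤ) + 1)).eval x := by
      simp [ckU, U_eq_X_mul_U_add_T]
    have h2 : |(T ℝ ((n : ℤ) + 1)).eval x| ≤ 1 := abs_eval_T_real_le_one _ (abs_le.2 hx)
    have h3 : |x * ckU n x| ≤ n + 1 := by
      rw [abs_mul]
      have := abs_le.2 hx
      nlinarith [abs_nonneg x, abs_nonneg (ckU n x)]
    rw [h1]
    push_cast
    exact (abs_add_le _ _).trans (by linarith)

theorem ck_integral_cos (k : ℤ) :
    ∫ t in (0 : ℝ)..Real.pi, Real.cos (k * t) = if k = 0 then Real.pi else 0 := by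
  split_ifs with h
  · simp [h]
  · have hk : (k : ℝ) ≠ 0 := by exact_mod_cast h
    rw [intervalIntegral.integral_comp_mul_left (fun t => Real.cos t) hk]
    simp [Real.sin_int_mul_pi]

theorem ck_orth (n m : ℕ) :
    ∫ t in (-1 : ℝ)..1, ckU n t * (ckU m t * Real.sqrt (1 - t ^ 2)) =
      if n = m then Real.pi / 2 else 0 := by
  have hc : Continuous fun t : ℝ => ckU n t * (ckU m t * Real.sqrt (1 - t ^ 2)) := by
    have := ckU_continuous n
    have := ckU_continuous m
    fun_prop
  have h := intervalIntegral.integral_comp_mul_deriv (a := 0) (b := Real.pi)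
    (f := Real.cos) (f' := fun t => -Real.sin t) (fun t _ => Real.hasDerivAt_cos t)
    (by fun_prop) hc
  rw [Real.cos_zero, Real.cos_pi, intervalIntegral.integral_symm (-1) 1] at h
  have h2 : ∫ t in (0 : ℝ)..Real.pi,
      ((fun t : ℝ => ckU n t * (ckU m t * Real.sqrt (1 - t ^ 2))) ∘ Real.cos) t * -Real.sin t =
      ∫ t in (0 : ℝ)..Real.pi, (1 / 2) * (Real.cos (((n + m + 2 : ℤ) : ℝ) * t)
        - Real.cos (((n - m : ℤ) : ℝ) * t)) := by
    apply intervalIntegral.integral_congr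
    intro t ht
    rw [Set.uIcc_of_le Real.pi_pos.le] at ht
    have hs : Real.sqrt (1 - Real.cos t ^ 2) = Real.sin t := by
      rw [← Real.sin_sq, Real.sqrt_sq (Real.sin_nonneg_of_mem_Icc ht)]
    have e1 : ckU n (Real.cos t) * Real.sin t = Real.sin ((n + 1) * t) := by
      simpa [ckU] using U_real_cos t n
    have e2 : ckU m (Real.cos t) * Real.sin t = Real.sin ((m + 1) * t) := by
      simpa [ckU] using U_real_cos t m
    have e3 : ((n + m + 2 : ℤ) : ℝ) * t = (n + 1) * t + (m + 1) * t := by push_cast; ring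
    have e4 : ((n - m : ℤ) : ℝ) * t = (n + 1) * t - (m + 1) * t := by push_cast; ring
    simp only [Function.comp]
    rw [hs, e3, e4, Real.cos_add, Real.cos_sub, ← e1, ← e2]
    ring
  rw [h2, intervalIntegral.integral_const_mul, intervalIntegral.integral_sub
    (by apply Continuous.intervalIntegrable; fun_prop)
    (by apply Continuous.intervalIntegrable; fun_prop), ck_integral_cos, ck_integral_cos] at h
  rw [if_neg (by omega)] at h
  by_cases hnm : n = m
  · rw [if_pos (by omega)] at h
    rw [if_pos hnm]; linarith
  · rw [if_neg (by omega)] at h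
    rw [if_neg hnm]; linarith

def ckW (x y ρ : ℝ) : ℝ :=
  (1 - ρ ^ 2) ^ 2 - 4 * x * y * ρ * (1 + ρ ^ 2) + 4 * ρ ^ 2 * (x ^ 2 + y ^ 2)

theorem ck_summable {ρ : ℝ} (h : |ρ| < 1) : Summable fun n : ℕ => |ρ| ^ n * ((n + 1 : ℝ) ^ 2) := by
  have h' : ‖|ρ|‖ < 1 := by simpa using h
  have s2 := summable_pow_mul_geometric_of_norm_lt_one 2 h'
  have s1 := summable_pow_mul_geometric_of_norm_lt_one 1 h'
  have s0 := summable_pow_mul_geometric_of_norm_lt_one 0 h'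
  refine ((s2.add (s1.mul_left 2)).add s0).congr fun n => ?_
  ring

theorem ck_term_bound {ρ x y : ℝ} (hx : x ∈ Set.Icc (-1 : ℝ) 1)
    (hy : y ∈ Set.Icc (-1 : ℝ) 1) (n : ℕ) :
    |ρ ^ n * (ckU n x * ckU n y)| ≤ |ρ| ^ n * ((n + 1 : ℝ) ^ 2) := by
  rw [abs_mul, abs_mul, abs_pow, sq]
  have := ckU_bound n hx
  have := ckU_bound n hy
  gcongr

theorem ck_gen {ρ x y : ℝ} (h : |ρ| < 1) (hx : x ∈ Set.Icc (-1 : ℝ) 1)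
    (hy : y ∈ Set.Icc (-1 : ℝ) 1) :
    HasSum (fun n => ρ ^ n * (ckU n x * ckU n y)) ((1 - ρ ^ 2) / ckW x y ρ) := by
  have hs : Summable (fun n => ρ ^ n * (ckU n x * ckU n y)) :=
    Summable.of_norm_bounded (ck_summable h) (fun n => ck_term_bound hx hy n)
  obtain ⟨S, hS⟩ := hs
  have t1 := (hasSum_nat_add_iff' 1).2 hS
  have t2 := (hasSum_nat_add_iff' 2).2 hS
  have t3 := (hasSum_nat_add_iff' 3).2 hS
  have t4 := (hasSum_nat_add_iff' 4).2 hS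
  have key := (((t4.add (t3.mul_left (-4 * x * y * ρ))).add
    (t2.mul_left ((4 * x ^ 2 + 4 * y ^ 2 - 2) * ρ ^ 2))).add
    (t1.mul_left (-4 * x * y * ρ ^ 3))).add (hS.mul_left (ρ ^ 4))
  have hz : ∀ n : ℕ, ckU (n + 2) x = 2 * x * ckU (n + 1) x - ckU n x := fun n => ckU_add_two n x
  have hzy : ∀ n : ℕ, ckU (n + 2) y = 2 * y * ckU (n + 1) y - ckU n y := fun n => ckU_add_two n y
  have key0 := key.unique (by
    convert! (hasSum_zero : HasSum (fun _ : ℕ => (0 : ℝ)) 0) using 2 with n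
    rw [hz (n + 2), hz (n + 1), hz n, hzy (n + 2), hzy (n + 1), hzy n]
    ring)
  simp only [Finset.sum_range_succ, Finset.sum_range_zero, hz 0, hz 1, hzy 0, hzy 1,
    ckU_zero, ckU_one, zero_add, Nat.reduceAdd] at key0
  have e : ckW x y ρ * S = 1 - ρ ^ 2 := by
    unfold ckW
    linear_combination key0
  have hw : ckW x y ρ ≠ 0 := by
    intro h0
    rw [h0] at e
    have := (sq_lt_one_iff_abs_lt_one ρ).2 h
    linarith
  have : S = (1 - ρ ^ 2) / ckW x y ρ := by
    field_simp
    linarith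
  rwa [← this]

theorem ck_swap {ρ x C : ℝ} (h : |ρ| < 1) (hx : x ∈ Set.Icc (-1 : ℝ) 1) {G : ℝ → ℝ}
    (hG : Measurable G) (hC : ∀ t ∈ Set.Icc (-1 : ℝ) 1, |G t| ≤ C) :
    HasSum (fun n => ρ ^ n * ckU n x * ∫ t in (-1 : ℝ)..1, ckU n t * G t)
      (∫ t in (-1 : ℝ)..1, (1 - ρ ^ 2) / ckW x t ρ * G t) := by
  have hI : ∀ t ∈ Set.uIoc (-1 : ℝ) 1, t ∈ Set.Icc (-1 : ℝ) 1 := by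
    intro t ht
    rw [Set.uIoc_of_le (by norm_num)] at ht
    exact ⟨ht.1.le, ht.2⟩
  have := intervalIntegral.hasSum_integral_of_dominated_convergence
    (μ := volume) (a := -1) (b := 1)
    (F := fun n t => ρ ^ n * (ckU n x * ckU n t) * G t)
    (f := fun t => (1 - ρ ^ 2) / ckW x t ρ * G t)
    (fun n _ => |ρ| ^ n * ((n + 1 : ℝ) ^ 2) * C)
    (fun n => by
      have := (ckU_continuous n).measurable
      apply Measurable.aestronglyMeasurable
      fun_prop)
    (fun n => Filter.Eventually.of_forall fun t ht => by
      rw [Real.norm_eq_abs, abs_mul]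
      have := ck_term_bound (ρ := ρ) hx (hI t ht) n
      have := hC t (hI t ht)
      gcongr)
    (Filter.Eventually.of_forall fun t ht => (ck_summable h).mul_right C)
    (by simp)
    (Filter.Eventually.of_forall fun t ht => (ck_gen h hx (hI t ht)).mul_right _)
  convert! this using 2 with n
  rw [← intervalIntegral.integral_const_mul]
  congr 1
  ext t
  ring

theorem ck_inner {ρ y : ℝ} (h : |ρ| < 1) (hy : y ∈ Set.Icc (-1 : ℝ) 1) (m : ℕ) :
    ∫ t in (-1 : ℝ)..1, ckU m t * (Real.sqrt (1 - t ^ 2) * ((1 - ρ ^ 2) / ckW y t ρ)) =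
      Real.pi / 2 * (ρ ^ m * ckU m y) := by
  have hm := ckU_continuous m
  have h1 := ck_swap (C := m + 1) h hy (G := fun t => ckU m t * Real.sqrt (1 - t ^ 2))
    (by have := hm.measurable; fun_prop)
    (fun t ht => by
      rw [abs_mul, abs_of_nonneg (Real.sqrt_nonneg _)]
      have h1 := ckU_bound m ht
      have h2 : Real.sqrt (1 - t ^ 2) ≤ 1 := Real.sqrt_le_one.2 (by nlinarith [sq_nonneg t])
      nlinarith [abs_nonneg (ckU m t), Real.sqrt_nonneg (1 - t ^ 2)])
  simp only [ck_orth] at h1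
  have h2 := h1.unique (hasSum_single m fun n hn => by simp [hn])
  rw [if_pos rfl] at h2
  rw [← mul_comm (ρ ^ m * ckU m y), ← h2]
  congr 1
  ext t
  ring

theorem chapman_kolmogorov (ρ₁ ρ₂ x y₂ : ℝ) (h₁ : |ρ₁| < 1) (h₂ : |ρ₂| < 1)
    (hx : x ∈ Set.Icc (-1 : ℝ) 1) (hy₂ : y₂ ∈ Set.Icc (-1 : ℝ) 1)
    (w : ℝ → ℝ → ℝ → ℝ)
    (hw : ∀ x y ρ, w x y ρ =
      (1 - ρ ^ 2) ^ 2 - 4 * x * y * ρ * (1 + ρ ^ 2) + 4 * ρ ^ 2 * (x ^ 2 + y ^ 2))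
    (f : ℝ → ℝ → ℝ → ℝ)
    (hf : ∀ x y ρ, f x y ρ = (2 / Real.pi) * (1 - ρ ^ 2) * Real.sqrt (1 - x ^ 2) / w x y ρ) :
    ∫ y₁ in (-1 : ℝ)..1, f x y₁ ρ₁ * f y₁ y₂ ρ₂ = f x y₂ (ρ₁ * ρ₂) := by
  have hwW : ∀ x y ρ, w x y ρ = ckW x y ρ := hw
  have hsymm : ∀ x y ρ, ckW x y ρ = ckW y x ρ := by intros; unfold ckW; ring
  have h12 : |ρ₁ * ρ₂| < 1 := by
    rw [abs_mul]
    nlinarith [abs_nonneg ρ₁, abs_nonneg ρ₂]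
  have hsw := ck_swap (C := ∑' n : ℕ, |ρ₂| ^ n * ((n + 1 : ℝ) ^ 2)) h₁ hx
    (G := fun t => Real.sqrt (1 - t ^ 2) * ((1 - ρ₂ ^ 2) / ckW y₂ t ρ₂))
    (by unfold ckW; fun_prop)
    (fun t ht => by
      have hg := ck_gen h₂ hy₂ ht
      have hb : |(1 - ρ₂ ^ 2) / ckW y₂ t ρ₂| ≤ ∑' n : ℕ, |ρ₂| ^ n * ((n + 1 : ℝ) ^ 2) := by
        rw [← hg.tsum_eq, ← Real.norm_eq_abs]
        exact tsum_of_norm_bounded (f := fun n => ρ₂ ^ n * (ckU n y₂ * ckU n t))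
          (ck_summable h₂).hasSum (fun n => ck_term_bound hy₂ ht n)
      rw [abs_mul, abs_of_nonneg (Real.sqrt_nonneg _)]
      have h2 : Real.sqrt (1 - t ^ 2) ≤ 1 := Real.sqrt_le_one.2 (by nlinarith [sq_nonneg t])
      nlinarith [abs_nonneg ((1 - ρ₂ ^ 2) / ckW y₂ t ρ₂), Real.sqrt_nonneg (1 - t ^ 2)])
  simp only [ck_inner h₂ hy₂] at hsw
  have hfin := (ck_gen h12 hx hy₂).mul_left (Real.pi / 2)
  have heq := hsw.unique (by
    convert! hfin using 2 with n
    rw [mul_pow]; ring)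
  have hL : ∀ t, f x t ρ₁ * f t y₂ ρ₂ = (4 / Real.pi ^ 2 * Real.sqrt (1 - x ^ 2)) *
      ((1 - ρ₁ ^ 2) / ckW x t ρ₁ * (Real.sqrt (1 - t ^ 2) * ((1 - ρ₂ ^ 2) / ckW y₂ t ρ₂))) := by
    intro t
    rw [hf, hf, hwW, hwW, hsymm t y₂]
    ring
  simp only [hL]
  rw [intervalIntegral.integral_const_mul, heq, hf, hwW]
  have := Real.pi_ne_zero
  field_simp
  ring
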